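/- arXiv:1611.07214 — 2 statements merged into one kernel-verified Lean document; each statement's English description precedes it below -/
import Mathlib

section
/- Divergence interchange formula: Let T be a rooted tree with no infinite geodesic, no vertex with exactly one successor, nonempty boundary, length function ℓ, and let P and Q be fully supported probability measures on ∂T with ℓ(P) < ∞. If H(P) = ∑_{v∈∂T} P(v)·log₂(1/P(v)) is finite and the function v ↦ P(v)·log₂(P(v)/Q(v)) is absolutely summable over ∂T, then for every interior node x the series D_{p,q}(x) = ∑_{y∈N(x)} p(y|x)·log₂(p(y|x)/q(y|x)) is absolutely convergent, and D(P‖Q)/ℓ(P) = ∑_{x ∈ interior T} μ_P(x)·D_{p,q}(x)/ℓ(x), where D(P‖Q) = ∑_{v∈∂T} P(v)·log₂(P(v)/Q(v)). -/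
open scoped BigOperators
open Filter

noncomputable section

/-- The entropy function `φ(t) = t·log₂(1/t)` (which vanishes at `t = 0`). -/
def phi (t : ℝ) : ℝ := t * Real.logb 2 (1 / t)

/-- A rooted tree: a set of finite lists over ℕ containing the empty list (the root)
and closed under taking prefixes. -/
def IsTree (T : Set (List ℕ)) : Prop :=
  ([] : List ℕ) ∈ T ∧ ∀ x ∈ T, ∀ y : List ℕ, y <+: x → y ∈ T

/-- The successors of `x` in `T`: one-entry extensions of `x` lying in `T`. -/
def succs (T : Set (List ℕ)) (x : List ℕ) : Set (List ℕ) :=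
  {y | y ∈ T ∧ ∃ n : ℕ, y = x ++ [n]}

/-- `x` is a leaf of `T`. -/
def IsLeaf (T : Set (List ℕ)) (x : List ℕ) : Prop :=
  x ∈ T ∧ succs T x = ∅

/-- The boundary of `T`: its set of leaves. -/
def bdry (T : Set (List ℕ)) : Set (List ℕ) := {x | IsLeaf T x}

/-- The interior of `T`. -/
def intr (T : Set (List ℕ)) : Set (List ℕ) := T \ bdry T

/-- No vertex has exactly one successor. -/
def NoUnary (T : Set (List ℕ)) : Prop :=
  ∀ x ∈ T, ∀ y : List ℕ, succs T x ≠ {y}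

/-- `T` has no infinite geodesic. -/
def NoInfGeo (T : Set (List ℕ)) : Prop :=
  ¬ ∃ ξ : ℕ → ℕ, ∀ n : ℕ, (List.ofFn fun i : Fin n => ξ i) ∈ T

/-- `∂T_x`: the set of leaves having `x` as a prefix. -/
def cone (T : Set (List ℕ)) (x : List ℕ) : Set (List ℕ) :=
  {v | v ∈ bdry T ∧ x <+: v}

/-- `P(∂T_x)`. -/
def mass (T : Set (List ℕ)) (P : List ℕ → ℝ) (x : List ℕ) : ℝ :=
  ∑' v : cone T x, P v

/-- `|x|_ℓ`: the sum of `ℓ(y)` over the proper prefixes `y` of `x`. -/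
def lenWt (ℓ : List ℕ → ℝ) (x : List ℕ) : ℝ :=
  ∑ i ∈ Finset.range x.length, ℓ (x.take i)

/-- Expected length `ℓ(P)`. -/
def expLen (T : Set (List ℕ)) (ℓ P : List ℕ → ℝ) : ℝ :=
  ∑' v : bdry T, lenWt ℓ v * P v

/-- Forward transition probability `p(y|x) = P(∂T_y)/P(∂T_x)`. -/
def fwd (T : Set (List ℕ)) (P : List ℕ → ℝ) (x y : List ℕ) : ℝ :=
  mass T P y / mass T P x

/-- Node-average measure `μ_P(x) = ℓ(x)·P(∂T_x)/ℓ(P)`. -/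
def nodeAvg (T : Set (List ℕ)) (ℓ P : List ℕ → ℝ) (x : List ℕ) : ℝ :=
  ℓ x * mass T P x / expLen T ℓ P

/-- A (fully supported) probability measure on a set `S` of vertices. -/
def IsProbOn (S : Set (List ℕ)) (P : List ℕ → ℝ) : Prop :=
  (∀ v ∈ S, 0 < P v) ∧ HasSum (fun v : S => P v) 1

/-- The local divergence `D_{p,q}(x) = ∑_{y∈N(x)} p(y|x)·log₂(p(y|x)/q(y|x))`. -/
def Dloc (T : Set (List ℕ)) (P Q : List ℕ → ℝ) (x : List ℕ) : ℝ :=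
  ∑' y : succs T x, fwd T P x y * Real.logb 2 (fwd T P x y / fwd T Q x y)

/-!
Collapsing the cone of a vertex `x` to a point loses the divergence
`Δ(x) = ∑_{v ∈ ∂T_x} P(v)·log₂(P(v)/Q(v)) - P(∂T_x)·log₂(P(∂T_x)/Q(∂T_x))`. It vanishes at the
leaves, and the chain rule for the divergence gives
`Δ(x) = P(∂T_x)·D_{p,q}(x) + ∑_{y ∈ N(x)} Δ(y)` at interior vertices. As `T` has no infinite
geodesic, well-founded induction from the leaves shows that `Δ(x)` is the sum of
`P(∂T_z)·D_{p,q}(z)` over the interior vertices `z` below `x`; the terms are nonnegative by the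
log-sum inequality, so the nested sums may be merged into one. At the root, `Δ` is `D(P‖Q)`.
-/

section LogSum

variable {ι : Type*} {a b : ι → ℝ} {β : ℝ}

/-- Tangent-line bound for the convex function `t ↦ t * logb β t` at `t = r`, scaled by `b`. -/
lemma mul_logb_add_sub_div_log_le {x y r : ℝ} (hβ : 1 < β) (hx : 0 ≤ x) (hy : 0 < y)
    (hr : 0 < r) :
    x * Real.logb β r + (x - r * y) / Real.log β ≤ x * Real.logb β (x / y) := by
  have hlog : x * Real.log r + (x - r * y) ≤ x * Real.log (x / y) := by
    rcases hx.eq_or_lt with rfl | hx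
    · simpa using (mul_pos hr hy).le
    · have hratio : Real.log r - Real.log (x / y) ≤ r * y / x - 1 := by
        rw [← Real.log_div hr.ne' (div_pos hx hy).ne', div_div_eq_mul_div]
        exact Real.log_le_sub_one_of_pos (by positivity)
      have hscaled := mul_le_mul_of_nonneg_left hratio hx.le
      rw [mul_sub, mul_sub, mul_div_cancel₀ _ hx.ne'] at hscaled
      linarith
  simpa only [Real.logb, add_div, mul_div_assoc] using
    div_le_div_of_nonneg_right hlog (Real.log_pos hβ).le

theorem log_sum_inequality {A B D : ℝ} (hβ : 1 < β) (ha : ∀ i, 0 ≤ a i) (hb : ∀ i, 0 < b i)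
    (hA : HasSum a A) (hB : HasSum b B)
    (hD : HasSum (fun i => a i * Real.logb β (a i / b i)) D) :
    A * Real.logb β (A / B) ≤ D := by
  rcases (hA.nonneg ha).eq_or_lt with rfl | hApos
  · have ha0 : a = 0 := (hasSum_zero_iff_of_nonneg ha).1 hA
    have hD0 : D = 0 := hD.unique (by simp [ha0])
    simp [hD0]
  · obtain ⟨i⟩ : Nonempty ι :=
      not_isEmpty_iff.1 fun _ => hApos.ne (hasSum_empty.unique hA)
    have hBpos : 0 < B := (hb i).trans_le (le_hasSum hB i fun j _ => (hb j).le)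
    have htangent : HasSum
        (fun i => a i * Real.logb β (A / B) + (a i - A / B * b i) / Real.log β)
        (A * Real.logb β (A / B) + (A - A / B * B) / Real.log β) :=
      (hA.mul_right _).add ((hA.sub (hB.mul_left _)).div_const _)
    have hle := hasSum_le
      (fun i => mul_logb_add_sub_div_log_le hβ (ha i) (hb i) (div_pos hApos hBpos)) htangent hD
    simpa [div_mul_cancel₀ A hBpos.ne'] using hle

lemma summable_mul_logb_div_of_le {d : ι → ℝ} (hβ : 1 < β) (ha : ∀ i, 0 ≤ a i)
    (hb : ∀ i, 0 < b i) (hsa : Summable a) (hsb : Summable b) (hsd : Summable d)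
    (hle : ∀ i, a i * Real.logb β (a i / b i) ≤ d i) :
    Summable fun i => a i * Real.logb β (a i / b i) := by
  have hlower (i : ι) : (a i - b i) / Real.log β ≤ a i * Real.logb β (a i / b i) := by
    simpa using mul_logb_add_sub_div_log_le hβ (ha i) (hb i) one_pos
  have hgap : Summable fun i => d i - a i * Real.logb β (a i / b i) :=
    .of_nonneg_of_le (fun i => sub_nonneg.2 (hle i)) (fun i => sub_le_sub_left (hlower i) _)
      (hsd.sub ((hsa.sub hsb).div_const _))
  simpa using hsd.sub hgap

end LogSum

section DisjointUnion

variable {ι α : Type*} {t : ι → Set α} {f : α → ℝ} {g : ι → ℝ} {c : ℝ}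

lemma hasSum_iUnion_iff_sigma (ht : Pairwise (Function.onFun Disjoint t)) :
    HasSum (fun v : ⋃ i, t i => f v) c ↔ HasSum (fun p : Σ i, t i => f p.2) c :=
  ((Set.unionEqSigmaOfDisjoint ht).symm.hasSum_iff (f := fun v : ⋃ i, t i => f v)).symm

lemma hasSum_iUnion_of_nonneg (ht : Pairwise (Function.onFun Disjoint t))
    (hf : ∀ i, ∀ v ∈ t i, 0 ≤ f v) (hfg : ∀ i, HasSum (fun v : t i => f v) (g i))
    (hg : HasSum g c) : HasSum (fun v : ⋃ i, t i => f v) c := by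
  have hsummable : Summable fun p : Σ i, t i => f p.2 :=
    (summable_sigma_of_nonneg (f := fun p : Σ i, t i => f p.2) fun p => hf p.1 p.2 p.2.2).2
      ⟨fun i => (hfg i).summable, hg.summable.congr fun i => (hfg i).tsum_eq.symm⟩
  exact (hasSum_iUnion_iff_sigma ht).2 (hg.sigma_of_hasSum hfg hsummable)

end DisjointUnion

lemma exists_forall_ofFn_prefix {α : Type*} {s : ℕ → List α} (hs : ∀ n, s n <+: s (n + 1))
    (hlen : ∀ n, n ≤ (s n).length) :
    ∃ ξ : ℕ → α, ∀ n, (List.ofFn fun i : Fin n => ξ i) <+: s n := by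
  have hmono {m n : ℕ} (hmn : m ≤ n) : s m <+: s n :=
    Nat.rel_of_forall_rel_succ_of_le (· <+: ·) hs hmn
  refine ⟨fun i => (s (i + 1))[i]'(hlen (i + 1)), fun n => ?_⟩
  have htake : (List.ofFn fun i : Fin n => (s (i + 1))[(i : ℕ)]'(hlen (i + 1))) = (s n).take n :=
    List.ext_getElem (by simp [hlen n]) fun i hi _ => by
      simpa using (hmono (by simpa using hi)).getElem _
  exact htake ▸ List.take_prefix n (s n)

section Tree

variable {T S : Set (List ℕ)} {x y : List ℕ}

lemma intr_subset : intr T ⊆ T := Set.sdiff_subset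

lemma bdry_subset : bdry T ⊆ T := fun _ hx => hx.1

lemma prefix_of_mem_succs (hy : y ∈ succs T x) : x <+: y := by
  obtain ⟨-, n, rfl⟩ := hy
  exact List.prefix_append _ _

lemma length_of_mem_succs (hy : y ∈ succs T x) : y.length = x.length + 1 := by
  obtain ⟨-, n, rfl⟩ := hy
  simp

lemma succs_nonempty_of_mem_intr (hx : x ∈ intr T) : (succs T x).Nonempty :=
  Set.nonempty_iff_ne_empty.2 fun h => hx.2 ⟨hx.1, h⟩

lemma IsTree.exists_mem_succs_prefix (hT : IsTree T) {v : List ℕ} (hv : v ∈ T) (hxv : x <+: v)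
    (hne : v ≠ x) : ∃ y ∈ succs T x, y <+: v := by
  obtain ⟨_ | ⟨n, t⟩, rfl⟩ := hxv
  · simp at hne
  · have hprefix : x ++ [n] <+: x ++ n :: t := ⟨t, by simp⟩
    exact ⟨x ++ [n], ⟨hT.2 _ hv _ hprefix, n, rfl⟩, hprefix⟩

lemma IsTree.wellFounded_succs (hT : IsTree T) (hG : NoInfGeo T) :
    WellFounded fun y x => y ∈ succs T x := by
  refine wellFounded_iff_isEmpty_descending_chain.2 ⟨fun ⟨s, hs⟩ => hG ?_⟩
  have hlen (n : ℕ) : n ≤ (s n).length := by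
    induction n with
    | zero => exact Nat.zero_le _
    | succ n ih => simpa [length_of_mem_succs (hs n)] using ih
  obtain ⟨ξ, hξ⟩ := exists_forall_ofFn_prefix (fun n => prefix_of_mem_succs (hs n)) hlen
  exact ⟨ξ, fun n => hT.2 _ (hs n).1 _ ((hξ n).trans (prefix_of_mem_succs (hs n)))⟩

/-- The elements of `S` having `x` as a prefix, `x` itself included. For `S = bdry T` this is
definitionally `cone T x`; for `S = intr T` it is the interior of the subtree rooted at `x`. -/
def descendants (S : Set (List ℕ)) (x : List ℕ) : Set (List ℕ) := {v | v ∈ S ∧ x <+: v}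

@[simp]
lemma descendants_nil : descendants S [] = S := by
  simp [descendants]

lemma pairwise_disjoint_descendants (T S : Set (List ℕ)) (x : List ℕ) :
    Pairwise (Function.onFun Disjoint fun y : succs T x => descendants S y) := by
  rintro ⟨y, hy⟩ ⟨z, hz⟩ hne
  refine Set.disjoint_left.2 fun v hyv hzv => hne (Subtype.ext ?_)
  have hlen : y.length = z.length := by rw [length_of_mem_succs hy, length_of_mem_succs hz]
  exact (List.prefix_of_prefix_length_le hyv.2 hzv.2 hlen.le).eq_of_length hlen

lemma IsTree.descendants_diff_singleton (hT : IsTree T) (hS : S ⊆ T) (x : List ℕ) :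
    descendants S x \ {x} = ⋃ y : succs T x, descendants S y := by
  ext v
  simp only [Set.mem_iUnion]
  constructor
  · rintro ⟨⟨hv, hxv⟩, hne⟩
    obtain ⟨y, hy, hyv⟩ := hT.exists_mem_succs_prefix (hS hv) hxv hne
    exact ⟨⟨y, hy⟩, hv, hyv⟩
  · rintro ⟨⟨y, hy⟩, hv, hyv⟩
    refine ⟨⟨hv, (prefix_of_mem_succs hy).trans hyv⟩, ?_⟩
    rintro rfl
    have := hyv.length_le
    rw [length_of_mem_succs hy] at this
    lia

lemma IsTree.cone_eq_iUnion (hT : IsTree T) (hx : x ∈ intr T) :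
    cone T x = ⋃ y : succs T x, cone T y := by
  have hxcone : x ∉ cone T x := fun h => hx.2 h.1
  rw [← Set.sdiff_singleton_eq_self hxcone]
  exact hT.descendants_diff_singleton bdry_subset x

lemma IsTree.descendants_diff_singleton_of_mem_bdry (hT : IsTree T) (hS : S ⊆ T)
    (hx : x ∈ bdry T) : descendants S x \ {x} = ∅ := by
  rw [hT.descendants_diff_singleton hS, hx.2]
  simp

lemma IsTree.cone_of_mem_bdry (hT : IsTree T) (hx : x ∈ bdry T) : cone T x = {x} :=
  (Set.sdiff_eq_empty.1 (hT.descendants_diff_singleton_of_mem_bdry bdry_subset hx)).antisymm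
    (Set.singleton_subset_iff.2 ⟨hx, List.prefix_rfl⟩)

lemma IsTree.cone_nonempty (hT : IsTree T) (hG : NoInfGeo T) (hx : x ∈ T) :
    (cone T x).Nonempty := by
  induction x using (hT.wellFounded_succs hG).induction with
  | _ x ih =>
    by_cases hleaf : x ∈ bdry T
    · exact ⟨x, hleaf, List.prefix_rfl⟩
    · obtain ⟨y, hy⟩ := succs_nonempty_of_mem_intr ⟨hx, hleaf⟩
      obtain ⟨v, hv, hyv⟩ := ih y hy hy.1
      exact ⟨v, hv, (prefix_of_mem_succs hy).trans hyv⟩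

theorem IsTree.hasSum_descendants_intr (hT : IsTree T) (hG : NoInfGeo T) {f F : List ℕ → ℝ}
    (hf : ∀ x ∈ intr T, 0 ≤ f x) (hleaf : ∀ x ∈ bdry T, F x = 0)
    (hstep : ∀ x ∈ intr T, HasSum (fun y : succs T x => F y) (F x - f x)) (hx : x ∈ T) :
    HasSum (fun z : descendants (intr T) x => f z) (F x) := by
  induction x using (hT.wellFounded_succs hG).induction with
  | _ x ih =>
    by_cases hxb : x ∈ bdry T
    · have hempty : descendants (intr T) x = ∅ := by
        rw [← hT.descendants_diff_singleton_of_mem_bdry intr_subset hxb,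
          Set.sdiff_singleton_eq_self fun h => h.1.2 hxb]
      rw [hempty, hleaf x hxb]
      exact hasSum_empty
    · have hxi : x ∈ intr T := ⟨hx, hxb⟩
      have hbelow : HasSum (fun z : ↥(descendants (intr T) x \ {x}) => f z) (F x - f x) := by
        rw [hT.descendants_diff_singleton intr_subset x]
        exact hasSum_iUnion_of_nonneg (pairwise_disjoint_descendants T _ x)
          (fun _ z hz => hf z hz.1) (fun y => ih y y.2 y.2.1) (hstep x hxi)
      have hself : x ∈ descendants (intr T) x := ⟨hxi, List.prefix_rfl⟩
      rw [← Set.union_sdiff_cancel (Set.singleton_subset_iff.2 hself), ← add_sub_cancel (f x) (F x)]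
      exact (hasSum_singleton x f).add_disjoint Set.disjoint_sdiff_right hbelow

end Tree

/-- A (fully supported) finite measure on a set `S` of vertices. -/
def IsFinMeasOn (S : Set (List ℕ)) (P : List ℕ → ℝ) : Prop :=
  (∀ v ∈ S, 0 < P v) ∧ Summable fun v : S => P v

lemma IsProbOn.isFinMeasOn {S : Set (List ℕ)} {P : List ℕ → ℝ} (hP : IsProbOn S P) :
    IsFinMeasOn S P :=
  ⟨hP.1, hP.2.summable⟩

section Mass

variable {T : Set (List ℕ)} {P f : List ℕ → ℝ} {x : List ℕ}

lemma hasSum_cone (hf : Summable fun v : bdry T => f v) (x : List ℕ) :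
    HasSum (fun v : cone T x => f v) (mass T f x) :=
  (hf.comp_injective (Set.inclusion_injective fun _ hv => hv.1)).hasSum

lemma mass_nil (T : Set (List ℕ)) (f : List ℕ → ℝ) : mass T f [] = ∑' v : bdry T, f v := by
  have hcone : cone T [] = bdry T := descendants_nil
  rw [mass, hcone]

lemma IsTree.mass_of_mem_bdry (hT : IsTree T) (hx : x ∈ bdry T) (f : List ℕ → ℝ) :
    mass T f x = f x := by
  rw [mass, hT.cone_of_mem_bdry hx]
  exact tsum_singleton x f

lemma IsTree.hasSum_mass_succs (hT : IsTree T) (hf : Summable fun v : bdry T => f v)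
    (hx : x ∈ intr T) : HasSum (fun y : succs T x => mass T f y) (mass T f x) := by
  have hsum := hasSum_cone hf x
  rw [hT.cone_eq_iUnion hx] at hsum
  exact ((hasSum_iUnion_iff_sigma (pairwise_disjoint_descendants T (bdry T) x)).1 hsum).sigma
    fun y => hasSum_cone hf y

lemma IsTree.mass_pos (hT : IsTree T) (hG : NoInfGeo T) (hP : IsFinMeasOn (bdry T) P)
    (hx : x ∈ T) : 0 < mass T P x := by
  obtain ⟨v, hv⟩ := hT.cone_nonempty hG hx
  exact (hP.1 v hv.1).trans_le
    (le_hasSum (hasSum_cone hP.2 x) ⟨v, hv⟩ fun w _ => (hP.1 w w.2.1).le)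

lemma IsTree.fwd_pos (hT : IsTree T) (hG : NoInfGeo T) (hP : IsFinMeasOn (bdry T) P)
    {y : List ℕ} (hx : x ∈ T) (hy : y ∈ T) : 0 < fwd T P x y :=
  div_pos (hT.mass_pos hG hP hy) (hT.mass_pos hG hP hx)

lemma IsTree.hasSum_fwd (hT : IsTree T) (hG : NoInfGeo T) (hP : IsFinMeasOn (bdry T) P)
    (hx : x ∈ intr T) : HasSum (fun y : succs T x => fwd T P x y) 1 := by
  rw [← div_self (hT.mass_pos hG hP hx.1).ne']
  exact (hT.hasSum_mass_succs hP.2 hx).div_const _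

lemma tsum_nodeAvg_mul_div {ℓ : List ℕ → ℝ} (hℓ : ∀ x ∈ intr T, ℓ x ≠ 0) (P f : List ℕ → ℝ) :
    ∑' x : intr T, nodeAvg T ℓ P x * (f x / ℓ x)
      = (∑' x : intr T, mass T P x * f x) / expLen T ℓ P := by
  rw [← tsum_div_const]
  refine tsum_congr fun x => ?_
  have := hℓ x x.2
  rw [nodeAvg]
  field_simp

end Mass

/-- The summand `p·log₂(p/q)` of a divergence `D(p‖q)`; `p` and `q` may be leaf
weights, cone masses or transition probabilities. -/
def divDensity (p q : List ℕ → ℝ) (v : List ℕ) : ℝ := p v * Real.logb 2 (p v / q v)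

/-- `P(∂T_x)·D(P(·|∂T_x)‖Q(·|∂T_x))`, the weighted divergence of the conditional measures on the
cone of `x`, written without conditioning as the divergence over the cone minus the divergence
that remains once the cone is collapsed to the single point `x`. -/
def coneDiv (T : Set (List ℕ)) (P Q : List ℕ → ℝ) (x : List ℕ) : ℝ :=
  mass T (divDensity P Q) x - divDensity (mass T P) (mass T Q) x

section Divergence

variable {T : Set (List ℕ)} {P Q : List ℕ → ℝ} {x : List ℕ}

lemma IsTree.coneDiv_of_mem_bdry (hT : IsTree T) (hx : x ∈ bdry T) : coneDiv T P Q x = 0 := by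
  simp [coneDiv, divDensity, hT.mass_of_mem_bdry hx]

lemma divDensity_mass_le_mass_divDensity (hP : IsFinMeasOn (bdry T) P)
    (hQ : IsFinMeasOn (bdry T) Q) (hD : Summable fun v : bdry T => divDensity P Q v)
    (x : List ℕ) : divDensity (mass T P) (mass T Q) x ≤ mass T (divDensity P Q) x :=
  log_sum_inequality one_lt_two (fun v : cone T x => (hP.1 v v.2.1).le)
    (fun v : cone T x => hQ.1 v v.2.1) (hasSum_cone hP.2 x) (hasSum_cone hQ.2 x) (hasSum_cone hD x)

lemma IsTree.summable_divDensity_mass (hT : IsTree T) (hG : NoInfGeo T)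
    (hP : IsFinMeasOn (bdry T) P) (hQ : IsFinMeasOn (bdry T) Q)
    (hD : Summable fun v : bdry T => divDensity P Q v) (hx : x ∈ intr T) :
    Summable fun y : succs T x => divDensity (mass T P) (mass T Q) y :=
  summable_mul_logb_div_of_le one_lt_two (fun y => (hT.mass_pos hG hP y.2.1).le)
    (fun y => hT.mass_pos hG hQ y.2.1) (hT.hasSum_mass_succs hP.2 hx).summable
    (hT.hasSum_mass_succs hQ.2 hx).summable (hT.hasSum_mass_succs hD hx).summable
    fun y => divDensity_mass_le_mass_divDensity hP hQ hD y

lemma IsTree.mass_mul_divDensity_fwd (hT : IsTree T) (hG : NoInfGeo T)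
    (hP : IsFinMeasOn (bdry T) P) (hQ : IsFinMeasOn (bdry T) Q) {y : List ℕ} (hx : x ∈ T)
    (hy : y ∈ T) :
    mass T P x * divDensity (fwd T P x) (fwd T Q x) y
      = divDensity (mass T P) (mass T Q) y
        - mass T P y * Real.logb 2 (mass T P x / mass T Q x) := by
  have hPx := hT.mass_pos hG hP hx
  have hQx := hT.mass_pos hG hQ hx
  have hPy := hT.mass_pos hG hP hy
  have hQy := hT.mass_pos hG hQ hy
  have hratio : fwd T P x y / fwd T Q x y
      = (mass T P y / mass T Q y) / (mass T P x / mass T Q x) :=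
    div_div_div_comm ..
  rw [divDensity, hratio, Real.logb_div (by positivity) (by positivity), ← mul_assoc, fwd,
    mul_div_cancel₀ _ hPx.ne', mul_sub, divDensity]

lemma IsTree.hasSum_mass_mul_divDensity_fwd (hT : IsTree T) (hG : NoInfGeo T)
    (hP : IsFinMeasOn (bdry T) P) (hQ : IsFinMeasOn (bdry T) Q)
    (hD : Summable fun v : bdry T => divDensity P Q v) (hx : x ∈ intr T) :
    HasSum (fun y : succs T x => mass T P x * divDensity (fwd T P x) (fwd T Q x) y)
      ((∑' y : succs T x, divDensity (mass T P) (mass T Q) y)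
        - divDensity (mass T P) (mass T Q) x) := by
  have hsum := (hT.summable_divDensity_mass hG hP hQ hD hx).hasSum.sub
    ((hT.hasSum_mass_succs hP.2 hx).mul_right (Real.logb 2 (mass T P x / mass T Q x)))
  exact hsum.congr_fun fun y => hT.mass_mul_divDensity_fwd hG hP hQ hx.1 y.2.1

lemma IsTree.summable_divDensity_fwd (hT : IsTree T) (hG : NoInfGeo T)
    (hP : IsFinMeasOn (bdry T) P) (hQ : IsFinMeasOn (bdry T) Q)
    (hD : Summable fun v : bdry T => divDensity P Q v) (hx : x ∈ intr T) :
    Summable fun y : succs T x => divDensity (fwd T P x) (fwd T Q x) y :=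
  (summable_mul_left_iff (hT.mass_pos hG hP hx.1).ne').1
    (hT.hasSum_mass_mul_divDensity_fwd hG hP hQ hD hx).summable

lemma IsTree.Dloc_nonneg (hT : IsTree T) (hG : NoInfGeo T) (hP : IsFinMeasOn (bdry T) P)
    (hQ : IsFinMeasOn (bdry T) Q) (hD : Summable fun v : bdry T => divDensity P Q v)
    (hx : x ∈ intr T) : 0 ≤ Dloc T P Q x := by
  simpa [Dloc, divDensity] using log_sum_inequality one_lt_two
    (fun y => (hT.fwd_pos hG hP hx.1 y.2.1).le)
    (fun y => hT.fwd_pos hG hQ hx.1 y.2.1) (hT.hasSum_fwd hG hP hx) (hT.hasSum_fwd hG hQ hx)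
    (hT.summable_divDensity_fwd hG hP hQ hD hx).hasSum

lemma IsTree.hasSum_coneDiv_succs (hT : IsTree T) (hG : NoInfGeo T)
    (hP : IsFinMeasOn (bdry T) P) (hQ : IsFinMeasOn (bdry T) Q)
    (hD : Summable fun v : bdry T => divDensity P Q v) (hx : x ∈ intr T) :
    HasSum (fun y : succs T x => coneDiv T P Q y)
      (coneDiv T P Q x - mass T P x * Dloc T P Q x) := by
  have hDloc : mass T P x * Dloc T P Q x
      = (∑' y : succs T x, divDensity (mass T P) (mass T Q) y)
        - divDensity (mass T P) (mass T Q) x :=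
    tsum_mul_left.symm.trans (hT.hasSum_mass_mul_divDensity_fwd hG hP hQ hD hx).tsum_eq
  rw [hDloc, coneDiv, sub_sub_sub_cancel_right]
  exact (hT.hasSum_mass_succs hD hx).sub (hT.summable_divDensity_mass hG hP hQ hD hx).hasSum

theorem IsTree.hasSum_mass_mul_Dloc (hT : IsTree T) (hG : NoInfGeo T)
    (hP : IsFinMeasOn (bdry T) P) (hQ : IsFinMeasOn (bdry T) Q)
    (hD : Summable fun v : bdry T => divDensity P Q v) (hx : x ∈ T) :
    HasSum (fun z : descendants (intr T) x => mass T P z * Dloc T P Q z) (coneDiv T P Q x) :=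
  hT.hasSum_descendants_intr hG
    (fun _ hz => mul_nonneg (hT.mass_pos hG hP hz.1).le (hT.Dloc_nonneg hG hP hQ hD hz))
    (fun _ hz => hT.coneDiv_of_mem_bdry hz)
    (fun _ hz => hT.hasSum_coneDiv_succs hG hP hQ hD hz) hx

end Divergence

theorem divergence_interchange_general {T : Set (List ℕ)} (hT : IsTree T) (hG : NoInfGeo T)
    {P Q : List ℕ → ℝ} (hP : IsFinMeasOn (bdry T) P) (hQ : IsFinMeasOn (bdry T) Q)
    (hD : Summable fun v : bdry T => P v * Real.logb 2 (P v / Q v)) :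
    (∀ x ∈ intr T,
      Summable fun y : succs T x => fwd T P x y * Real.logb 2 (fwd T P x y / fwd T Q x y)) ∧
    HasSum (fun x : intr T => mass T P x * Dloc T P Q x)
      ((∑' v : bdry T, P v * Real.logb 2 (P v / Q v))
        - (∑' v : bdry T, P v)
          * Real.logb 2 ((∑' v : bdry T, P v) / ∑' v : bdry T, Q v)) := by
  refine ⟨fun x hx => hT.summable_divDensity_fwd hG hP hQ hD hx, ?_⟩
  have hroot := hT.hasSum_mass_mul_Dloc hG hP hQ hD hT.1
  rw [descendants_nil] at hroot
  simpa only [coneDiv, divDensity, mass_nil] using hroot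

/-- Divergence interchange formula: if `H(P)` is finite and `D(P‖Q)` converges absolutely,
then each `D_{p,q}(x)` converges absolutely and
`D(P‖Q)/ℓ(P) = ∑_{x ∈ interior T} μ_P(x)·D_{p,q}(x)/ℓ(x)`. -/
theorem divergence_interchange
    (T : Set (List ℕ)) (hT : IsTree T) (hU : NoUnary T) (hG : NoInfGeo T)
    (hB : (bdry T).Nonempty) (hroot : ([] : List ℕ) ∈ intr T)
    (ℓ : List ℕ → ℝ) (hℓ : ∀ x ∈ intr T, 0 < ℓ x)
    (P Q : List ℕ → ℝ) (hP : IsProbOn (bdry T) P) (hQ : IsProbOn (bdry T) Q)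
    (hlen : Summable fun v : bdry T => lenWt ℓ v * P v)
    (hH : Summable fun v : bdry T => phi (P v))
    (hD : Summable fun v : bdry T => |P v * Real.logb 2 (P v / Q v)|) :
    (∀ x ∈ intr T,
      Summable fun y : succs T x => |fwd T P x y * Real.logb 2 (fwd T P x y / fwd T Q x y)|) ∧
    (∑' v : bdry T, P v * Real.logb 2 (P v / Q v)) / expLen T ℓ P
      = ∑' x : intr T, nodeAvg T ℓ P x * (Dloc T P Q x / ℓ x) := by
  obtain ⟨hloc, hsum⟩ :=
    divergence_interchange_general hT hG hP.isFinMeasOn hQ.isFinMeasOn hD.of_abs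
  exact ⟨fun x hx => (hloc x hx).abs, by
    simp [tsum_nodeAvg_mul_div fun x hx => (hℓ x hx).ne', hsum.tsum_eq, hP.2.tsum_eq,
      hQ.2.tsum_eq]⟩
end
end

section
/- Asymptotic entropy-rate comparison on trees with infinite geodesics: Let T be a rooted tree with no vertex having exactly one successor, carrying strictly positive unit flows B_P and B_Q with positive mass on the set of ends (i.e. ∑_{leaves v} B_P(v) < 1 and ∑_{leaves v} B_Q(v) < 1). Let ℓ be a length function on the non-leaf vertices of T and assume: the local entropy series of the forward transition probabilities p(y|x) = B_P(y)/B_P(x) and q(y|x) = B_Q(y)/B_Q(x) are uniformly summable, the entropies H(P_n) and H(Q_n) are finite for each n; (i) there are constants 0 < c₁ ≤ c₂ < ∞ with c₁ ≤ ℓ(x) ≤ c₂ for all non-leaf x; (ii) there is a finite h such that H_q(x)/ℓ(x) → h as |x| → ∞ (for every ε > 0 there is k such that |H_q(x)/ℓ(x) − h| < ε whenever x is a non-leaf vertex with |x| ≥ k); (iii) each D(P_n‖Q_n) is absolutely convergent and D(P_n‖Q_n)/n → 0 as n → ∞. Then H(P_n)/ℓ(P_n) → h and H(Q_n)/ℓ(Q_n)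 → h as n → ∞. -/
open scoped BigOperators
open Filter

noncomputable section

/-- A strictly positive unit flow on `T`: positive on `T`, value `1` at the root, and
flow conservation at every non-leaf vertex. It encodes a Borel probability measure on the
boundary (ends and leaves) of `T`. -/
def IsUnitFlow (T : Set (List ℕ)) (B : List ℕ → ℝ) : Prop :=
  (∀ x ∈ T, 0 < B x) ∧ B ([] : List ℕ) = 1 ∧
  ∀ x ∈ T, ¬ IsLeaf T x → HasSum (fun y : succs T x => B y) (B x)

/-- The section `S(n) = {x ∈ T : |x| = n} ∪ {leaves v : |v| < n}`. -/
def secn (T : Set (List ℕ)) (n : ℕ) : Set (List ℕ) :=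
  {x | (x ∈ T ∧ x.length = n) ∨ (IsLeaf T x ∧ x.length < n)}

/-- Uniform summability of the family of local series `y ↦ g x y`, `y ∈ N(x)`, over the
non-leaf vertices `x` of `T`. -/
def UnifSummable (T : Set (List ℕ)) (g : List ℕ → List ℕ → ℝ) : Prop :=
  ∀ ε : ℝ, 0 < ε → ∃ M : ℕ, ∀ x ∈ T, ¬ IsLeaf T x →
    ∃ F : Finset (List ℕ), ↑F ⊆ succs T x ∧ F.card ≤ M ∧
      (Summable fun y : {y : List ℕ // y ∈ succs T x ∧ y ∉ F} => g x y) ∧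
      (∑' y : {y : List ℕ // y ∈ succs T x ∧ y ∉ F}, g x y) < ε

/-!
Between consecutive sections, `H(P_n)`, `ℓ(P_n)` and `D(P_n‖Q_n)` grow by sums over the non-leaf
vertices `x` of depth `n`, weighted by the flow `B_P(x)`, of the local entropy, of `ℓ(x)` and of the
local divergence (chain rule). Uniform summability reduces a local entropy to boundedly many terms;
there, uniform continuity of `s ↦ φ(s²)` and the Hellinger lower bound for the divergence give
`|H_p(x) - H_q(x)| ≤ ε + C · D(p(·|x)‖q(·|x))`, so the increment of `H(P_n)` is `h` times that of
`ℓ(P_n)`, up to `ε` times the latter plus `C` times the increment of `D(P_n‖Q_n)`. Telescoping and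
dividing by `ℓ(P_n)` gives the limit: the non-leaf vertices of every depth carry at least the mass
of the ends, so `ℓ(P_n)` grows at least linearly and dominates `D(P_n‖Q_n)`. The claim for `Q` is
the case `P = Q`.
-/

open Topology Asymptotics
open InformationTheory (klFun klFun_nonneg klFun_apply)

section LogarithmicInequalities

theorem phi_eq_negMulLog_div (t : ℝ) : phi t = Real.negMulLog t / Real.log 2 := by
  rw [phi, Real.negMulLog, Real.logb, one_div, Real.log_inv]
  ring

theorem phi_nonneg {t : ℝ} (h₀ : 0 ≤ t) (h₁ : t ≤ 1) : 0 ≤ phi t := by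
  rw [phi_eq_negMulLog_div]
  exact div_nonneg (Real.negMulLog_nonneg h₀ h₁) (Real.log_nonneg one_le_two)

theorem continuous_phi : Continuous phi := by
  rw [funext phi_eq_negMulLog_div]
  exact Real.continuous_negMulLog.div_const _

theorem sq_sqrt_sub_one_le_klFun {u : ℝ} (hu : 0 ≤ u) : (√u - 1) ^ 2 ≤ klFun u := by
  obtain rfl | hu := hu.eq_or_lt
  · simp [klFun_apply]
  obtain ⟨s, hs, rfl⟩ : ∃ s : ℝ, 0 < s ∧ u = s ^ 2 :=
    ⟨√u, Real.sqrt_pos.2 hu, (Real.sq_sqrt hu.le).symm⟩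
  have hlog : s ^ 2 * (1 - s⁻¹) ≤ s ^ 2 * Real.log s :=
    mul_le_mul_of_nonneg_left (Real.one_sub_inv_le_log_of_pos hs) (sq_nonneg s)
  have hcancel : s ^ 2 * (1 - s⁻¹) = s ^ 2 - s := by field_simp
  rw [Real.sqrt_sq hs.le, klFun_apply, Real.log_pow, Nat.cast_ofNat]
  linarith

theorem sq_sqrt_sub_sqrt_le_mul_klFun {a b : ℝ} (ha : 0 ≤ a) (hb : 0 < b) :
    (√a - √b) ^ 2 ≤ b * klFun (a / b) := by
  have hb' : √b ≠ 0 := (Real.sqrt_pos.2 hb).ne'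
  calc (√a - √b) ^ 2 = √b ^ 2 * (√(a / b) - 1) ^ 2 := by
        rw [Real.sqrt_div ha]
        field_simp
    _ = b * (√(a / b) - 1) ^ 2 := by rw [Real.sq_sqrt hb.le]
    _ ≤ b * klFun (a / b) :=
        mul_le_mul_of_nonneg_left (sq_sqrt_sub_one_le_klFun (by positivity)) hb.le

theorem exists_dist_le_add_mul_sq {X Y : Type*} [PseudoMetricSpace X] [PseudoMetricSpace Y]
    {s : Set X} (hs : IsCompact s) {f : X → Y} (hf : ContinuousOn f s) {ε : ℝ} (hε : 0 < ε) :
    ∃ K : ℝ, 0 ≤ K ∧ ∀ x ∈ s, ∀ y ∈ s, dist (f x) (f y) ≤ ε + K * dist x y ^ 2 := by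
  obtain ⟨δ, hδ, hnear⟩ := Metric.uniformContinuousOn_iff_le.1
    (hs.uniformContinuousOn_of_continuous hf) ε hε
  obtain ⟨R, hR⟩ := Metric.isBounded_iff.1 (hs.image_of_continuousOn hf).isBounded
  refine ⟨|R| / δ ^ 2, by positivity, fun x hx y hy => ?_⟩
  rcases le_or_gt (dist x y) δ with hxy | hxy
  · exact (hnear x hx y hy hxy).trans (le_add_of_nonneg_right (by positivity))
  · calc dist (f x) (f y) ≤ |R| := (hR ⟨x, hx, rfl⟩ ⟨y, hy, rfl⟩).trans (le_abs_self R)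
      _ = |R| / δ ^ 2 * δ ^ 2 := by field_simp
      _ ≤ |R| / δ ^ 2 * dist x y ^ 2 := by gcongr
      _ ≤ ε + |R| / δ ^ 2 * dist x y ^ 2 := le_add_of_nonneg_left hε.le

theorem exists_abs_phi_sub_phi_le {ε : ℝ} (hε : 0 < ε) :
    ∃ K : ℝ, 0 ≤ K ∧ ∀ a b : ℝ, 0 ≤ a → a ≤ 1 → 0 < b → b ≤ 1 →
      |phi a - phi b| ≤ ε + K * (b * klFun (a / b)) := by
  have hcont : ContinuousOn (fun s : ℝ => phi (s ^ 2)) (Set.Icc 0 1) :=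
    (continuous_phi.comp (continuous_pow 2)).continuousOn
  obtain ⟨K, hK, hbound⟩ := exists_dist_le_add_mul_sq isCompact_Icc hcont hε
  refine ⟨K, hK, fun a b ha ha₁ hb hb₁ => ?_⟩
  have hdist := hbound (√a) ⟨Real.sqrt_nonneg a, Real.sqrt_le_one.2 ha₁⟩
    (√b) ⟨Real.sqrt_nonneg b, Real.sqrt_le_one.2 hb₁⟩
  rw [Real.sq_sqrt ha, Real.sq_sqrt hb.le, Real.dist_eq, Real.dist_eq, sq_abs] at hdist
  exact hdist.trans (by gcongr; exact sq_sqrt_sub_sqrt_le_mul_klFun ha hb)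

end LogarithmicInequalities

section Entropy

variable {ι : Type*} {p q : ι → ℝ}

/-- The Shannon entropy, in bits, of a family of masses (junk value `0` if the series diverges). -/
def entropy (p : ι → ℝ) : ℝ := ∑' i, phi (p i)

/-- The relative entropy `D(p‖q)`, in bits, of two families of masses (junk value `0` if the series
diverges). -/
def relEntropy (p q : ι → ℝ) : ℝ := ∑' i, p i * Real.logb 2 (p i / q i)

theorem hasSum_mul_klFun_div {a : ℝ} (hq : ∀ i, q i ≠ 0) (hp : HasSum p a) (hqa : HasSum q a)
    (hD : Summable fun i => p i * Real.logb 2 (p i / q i)) :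
    HasSum (fun i => q i * klFun (p i / q i)) (Real.log 2 * relEntropy p q) := by
  have hsum := (hD.hasSum.mul_left (Real.log 2)).add (hqa.sub hp)
  rw [sub_self, add_zero] at hsum
  refine hsum.congr_fun fun i => ?_
  have := hq i
  rw [klFun_apply, Real.logb]
  field_simp
  ring

theorem mul_logb_div_rescale {B C b c : ℝ} (hC : C ≠ 0) (hb : b ≠ 0) (hc : c ≠ 0) :
    B / b * Real.logb 2 (B / b / (C / c)) =
      (B * Real.logb 2 (B / C) - B * Real.logb 2 (b / c)) / b := by
  obtain rfl | hB := eq_or_ne B 0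
  · simp
  have hratio : B / b / (C / c) = B / C / (b / c) := by field_simp
  rw [hratio, Real.logb_div (div_ne_zero hB hC) (div_ne_zero hb hc)]
  ring

theorem hasSum_rescale {B C : ι → ℝ} {b c : ℝ} (hC : ∀ i, C i ≠ 0) (hb : b ≠ 0) (hc : c ≠ 0)
    (hB : HasSum B b) (hD : Summable fun i => B i * Real.logb 2 (B i / C i)) :
    HasSum (fun i => B i / b * Real.logb 2 (B i / b / (C i / c)))
      ((relEntropy B C - b * Real.logb 2 (b / c)) / b) := by
  refine ((hD.hasSum.sub (hB.mul_right (Real.logb 2 (b / c)))).div_const b).congr_fun fun i => ?_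
  exact mul_logb_div_rescale (hC i) hb hc

theorem relEntropy_sub_mul_logb {B C : ι → ℝ} {b c : ℝ} (hC : ∀ i, C i ≠ 0) (hb : b ≠ 0)
    (hc : c ≠ 0) (hB : HasSum B b) (hD : Summable fun i => B i * Real.logb 2 (B i / C i)) :
    relEntropy B C - b * Real.logb 2 (b / c) =
      b * relEntropy (fun i => B i / b) (fun i => C i / c) := by
  rw [relEntropy.eq_def (fun i => B i / b), (hasSum_rescale hC hb hc hB hD).tsum_eq,
    mul_div_cancel₀ _ hb]

theorem phi_eq_neg_mul_logb_div_one (t : ℝ) : phi t = -(t * Real.logb 2 (t / 1)) := by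
  rw [phi, one_div, Real.logb_inv, div_one, mul_neg]

theorem entropy_eq_neg_relEntropy_one (p : ι → ℝ) : entropy p = -relEntropy p (fun _ => 1) := by
  simp only [entropy, relEntropy, phi_eq_neg_mul_logb_div_one, tsum_neg]

theorem entropy_sub_phi {B : ι → ℝ} {b : ℝ} (hb : b ≠ 0) (hB : HasSum B b)
    (hs : Summable fun i => phi (B i)) :
    entropy B - phi b = b * entropy (fun i => B i / b) := by
  simp only [phi_eq_neg_mul_logb_div_one, summable_neg_iff] at hs
  have hscale := relEntropy_sub_mul_logb (C := fun _ => 1) (fun _ => one_ne_zero) hb one_ne_zero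
    hB hs
  simp only [div_self one_ne_zero] at hscale
  rw [entropy_eq_neg_relEntropy_one, entropy_eq_neg_relEntropy_one, phi_eq_neg_mul_logb_div_one]
  linarith

theorem abs_sub_le_of_sum_close {f g : ι → ℝ} {F F' G : Finset ι} {ε δ : ℝ}
    (hf : Summable f) (hg : Summable g) (hf₀ : ∀ i, 0 ≤ f i) (hg₀ : ∀ i, 0 ≤ g i)
    (hFG : F ⊆ G) (hFG' : F' ⊆ G) (hF : ∑' i, f i - ∑ i ∈ F, f i < ε)
    (hF' : ∑' i, g i - ∑ i ∈ F', g i < ε) (hG : |∑ i ∈ G, f i - ∑ i ∈ G, g i| ≤ δ) :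
    |∑' i, f i - ∑' i, g i| ≤ ε + δ := by
  have hFf := Finset.sum_le_sum_of_subset_of_nonneg hFG fun i _ _ => hf₀ i
  have hFg := Finset.sum_le_sum_of_subset_of_nonneg hFG' fun i _ _ => hg₀ i
  have hGf := hf.sum_le_tsum G fun i _ => hf₀ i
  have hGg := hg.sum_le_tsum G fun i _ => hg₀ i
  rw [abs_le] at hG ⊢
  constructor <;> linarith

/-- `K` must not depend on `ι`, `p` and `q`, so that the estimate is uniform over the vertices of a
tree. -/
theorem exists_abs_entropy_sub_entropy_le {ε : ℝ} (hε : 0 < ε) (M : ℕ) :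
    ∃ K : ℝ, ∀ {ι : Type*} {p q : ι → ℝ} {F F' : Finset ι},
      (∀ i, 0 ≤ p i) → (∀ i, 0 < q i) → HasSum p 1 → HasSum q 1 →
      (Summable fun i => phi (p i)) → (Summable fun i => phi (q i)) →
      F.card ≤ M → F'.card ≤ M →
      entropy p - ∑ i ∈ F, phi (p i) < ε → entropy q - ∑ i ∈ F', phi (q i) < ε →
      (Summable fun i => p i * Real.logb 2 (p i / q i)) →
      |entropy p - entropy q| ≤ 2 * ε + K * relEntropy p q := by
  classical
  obtain ⟨K, hK, hphi⟩ := exists_abs_phi_sub_phi_le (ε := ε / (2 * M + 1)) (by positivity)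
  refine ⟨K * Real.log 2, fun {ι p q F F'} hp hq hp₁ hq₁ hsp hsq hF hF' htp htq hD => ?_⟩
  have hp_le (i : ι) : p i ≤ 1 := le_hasSum hp₁ i fun j _ => hp j
  have hq_le (i : ι) : q i ≤ 1 := le_hasSum hq₁ i fun j _ => (hq j).le
  have hkl : ∑ i ∈ F ∪ F', q i * klFun (p i / q i) ≤ Real.log 2 * relEntropy p q :=
    sum_le_hasSum _ (fun i _ => mul_nonneg (hq i).le (klFun_nonneg (div_nonneg (hp i) (hq i).le)))
      (hasSum_mul_klFun_div (fun i => (hq i).ne') hp₁ hq₁ hD)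
  have hcard : ((F ∪ F').card : ℝ) * (ε / (2 * M + 1)) ≤ ε := by
    have : ((F ∪ F').card : ℝ) ≤ 2 * M := by
      exact_mod_cast (Finset.card_union_le F F').trans (by omega)
    rw [mul_div_assoc', div_le_iff₀ (by positivity)]
    nlinarith
  have hmain : |∑ i ∈ F ∪ F', phi (p i) - ∑ i ∈ F ∪ F', phi (q i)| ≤
      ε + K * (Real.log 2 * relEntropy p q) := by
    rw [← Finset.sum_sub_distrib]
    calc |∑ i ∈ F ∪ F', (phi (p i) - phi (q i))|
        ≤ ∑ i ∈ F ∪ F', |phi (p i) - phi (q i)| := Finset.abs_sum_le_sum_abs _ _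
      _ ≤ ∑ i ∈ F ∪ F', (ε / (2 * M + 1) + K * (q i * klFun (p i / q i))) :=
          Finset.sum_le_sum fun i _ => hphi _ _ (hp i) (hp_le i) (hq i) (hq_le i)
      _ = (F ∪ F').card * (ε / (2 * M + 1)) + K * ∑ i ∈ F ∪ F', q i * klFun (p i / q i) := by
          rw [Finset.sum_add_distrib, Finset.sum_const, nsmul_eq_mul, Finset.mul_sum]
      _ ≤ ε + K * (Real.log 2 * relEntropy p q) := by gcongr
  have hclose := abs_sub_le_of_sum_close hsp hsq (fun i => phi_nonneg (hp i) (hp_le i))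
    (fun i => phi_nonneg (hq i).le (hq_le i)) Finset.subset_union_left Finset.subset_union_right
    htp htq hmain
  rw [entropy, entropy]
  linarith

end Entropy

section Averaging

theorem abs_le_of_abs_increment_le {E L D : ℕ → ℝ} {ε C : ℝ} {k : ℕ}
    (hinc : ∀ n, k ≤ n →
      |E (n + 1) - E n| ≤ ε * (L (n + 1) - L n) + C * (D (n + 1) - D n))
    {n : ℕ} (hn : k ≤ n) :
    |E n| ≤ |E k| + ε * (L n - L k) + C * (D n - D k) := by
  induction n, hn using Nat.le_induction with
  | base => simp
  | succ n hn ih =>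
    have htri := abs_add_le (E n) (E (n + 1) - E n)
    rw [add_sub_cancel] at htri
    linarith [hinc n hn]

theorem tendsto_div_of_abs_increment_le {H L D : ℕ → ℝ} {h : ℝ} (hL : Tendsto L atTop atTop)
    (hD : D =o[atTop] L)
    (hinc : ∀ ε : ℝ, 0 < ε → ∃ (C : ℝ) (k : ℕ), ∀ n, k ≤ n →
      |H (n + 1) - H n - h * (L (n + 1) - L n)| ≤
        ε * (L (n + 1) - L n) + C * (D (n + 1) - D n)) :
    Tendsto (fun n => H n / L n) atTop (𝓝 h) := by
  rw [Metric.tendsto_nhds]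
  intro ε hε
  obtain ⟨C, k, hk⟩ := hinc (ε / 2) (half_pos hε)
  set A := |H k - h * L k| - ε / 2 * L k - C * D k with hA
  have hbound : ∀ n, k ≤ n → |H n - h * L n| ≤ A + ε / 2 * L n + C * D n := by
    intro n hn
    have := abs_le_of_abs_increment_le (E := fun n => H n - h * L n)
      (fun m hm => by convert hk m hm using 2; ring) hn
    linarith
  have herr : Tendsto (fun n => A / L n + ε / 2 + C * (D n / L n)) atTop (𝓝 (0 + ε / 2 + C * 0)) :=
    ((hL.const_div_atTop A).add_const _).add (hD.tendsto_div_nhds_zero.const_mul C)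
  have hlt : 0 + ε / 2 + C * 0 < ε := by linarith
  filter_upwards [herr.eventually_lt_const hlt, hL.eventually_gt_atTop 0, eventually_ge_atTop k]
    with n hsmall hpos hn
  calc dist (H n / L n) h = |H n - h * L n| / L n := by
        rw [Real.dist_eq, div_sub' hpos.ne', abs_div, abs_of_pos hpos, mul_comm h]
    _ ≤ (A + ε / 2 * L n + C * D n) / L n := by gcongr; exact hbound n hn
    _ = A / L n + ε / 2 + C * (D n / L n) := by field_simp
    _ < ε := hsmall

end Averaging

section Sections

variable {T : Set (List ℕ)} {n : ℕ} {f : List ℕ → ℝ}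

/-- The vertices of `T` of depth `n`. -/
def level (T : Set (List ℕ)) (n : ℕ) : Set (List ℕ) := {x ∈ T | x.length = n}

/-- The non-leaf vertices of `T` of depth `n`: those replaced by their successors on passing from
`S(n)` to `S(n+1)`. -/
def intrLevel (T : Set (List ℕ)) (n : ℕ) : Set (List ℕ) := {x ∈ intr T | x.length = n}

/-- The leaves of `T` of depth at most `n`: those common to `S(n)` and `S(n+1)`. -/
def leavesLE (T : Set (List ℕ)) (n : ℕ) : Set (List ℕ) := {x ∈ bdry T | x.length ≤ n}

/-- The sum of `f` over the section `S(n)` (junk value `0` if the series diverges). -/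
def secSum (T : Set (List ℕ)) (f : List ℕ → ℝ) (n : ℕ) : ℝ := ∑' x : secn T n, f x

theorem secn_subset (T : Set (List ℕ)) (n : ℕ) : secn T n ⊆ T := by
  rintro x (hx | hx)
  exacts [hx.1, hx.1.1]

theorem length_le_of_mem_secn {x : List ℕ} (hx : x ∈ secn T n) : x.length ≤ n := by
  rcases hx with hx | hx
  exacts [hx.2.le, hx.2.le]

theorem secn_eq_union (T : Set (List ℕ)) (n : ℕ) : secn T n = intrLevel T n ∪ leavesLE T n := by
  ext x
  have hleaf : IsLeaf T x → x ∈ T := And.left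
  simp only [secn, intrLevel, leavesLE, intr, bdry, Set.mem_ofPred_eq, Set.mem_union, Set.mem_sdiff]
  grind

theorem secn_succ_eq_union (T : Set (List ℕ)) (n : ℕ) :
    secn T (n + 1) = level T (n + 1) ∪ leavesLE T n := by
  ext x
  simp only [secn, level, leavesLE, bdry, Set.mem_ofPred_eq, Set.mem_union, Nat.lt_succ_iff]

theorem disjoint_intrLevel_leavesLE (T : Set (List ℕ)) (n : ℕ) :
    Disjoint (intrLevel T n) (leavesLE T n) :=
  Set.disjoint_left.2 fun _ hx hy => hx.1.2 hy.1

theorem disjoint_level_succ_leavesLE (T : Set (List ℕ)) (n : ℕ) :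
    Disjoint (level T (n + 1)) (leavesLE T n) :=
  Set.disjoint_left.2 fun _ hx hy => (hx.2 ▸ hy.2).not_gt n.lt_succ_self

theorem mem_intr_of_mem_succs (hT : IsTree T) {x y : List ℕ} (hy : y ∈ succs T x) :
    x ∈ intr T := by
  obtain ⟨m, rfl⟩ := hy.2
  refine ⟨hT.2 _ hy.1 _ (List.prefix_append _ _), fun hx => ?_⟩
  simp [hx.2] at hy

theorem pairwiseDisjoint_succs (T s : Set (List ℕ)) : s.PairwiseDisjoint (succs T) := by
  intro x _ x' _ hne
  refine Set.disjoint_left.2 fun y hy hy' => hne ?_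
  obtain ⟨m, rfl⟩ := hy.2
  obtain ⟨m', h⟩ := hy'.2
  exact (List.append_inj' h rfl).1

theorem iUnion_succs_intrLevel (hT : IsTree T) (n : ℕ) :
    ⋃ x ∈ intrLevel T n, succs T x = level T (n + 1) := by
  ext y
  simp only [Set.mem_iUnion, exists_prop]
  constructor
  · rintro ⟨x, hx, hy, m, rfl⟩
    exact ⟨hy, by rw [List.length_append, hx.2, List.length_singleton]⟩
  · rintro ⟨hy, hlen⟩
    have hne : y ≠ [] := List.ne_nil_of_length_eq_add_one hlen
    have hsucc : y ∈ succs T y.dropLast :=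
      ⟨hy, y.getLast hne, (List.dropLast_append_getLast hne).symm⟩
    exact ⟨y.dropLast, ⟨mem_intr_of_mem_succs hT hsucc, by simp [hlen]⟩, hsucc⟩

theorem hasSum_level_succ_iff (hT : IsTree T) {a : ℝ} :
    HasSum (fun x : level T (n + 1) => f x) a ↔
      HasSum (fun z : Σ x : intrLevel T n, succs T x => f z.2) a := by
  rw [← iUnion_succs_intrLevel hT,
    ← (Set.biUnionEqSigmaOfDisjoint (pairwiseDisjoint_succs T (intrLevel T n))).symm.hasSum_iff]
  simp only [Function.comp_def, Set.coe_biUnionEqSigmaOfDisjoint_symm_apply]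

theorem summable_of_subset {α : Type*} {s t : Set α} {f : α → ℝ} (hst : s ⊆ t)
    (hf : Summable fun x : t => f x) : Summable fun x : s => f x :=
  hf.comp_injective (i := Set.inclusion hst) (Set.inclusion_injective hst)

theorem summable_succs (hT : IsTree T) (hf : Summable fun x : secn T (n + 1) => f x)
    {x : List ℕ} (hx : x ∈ intrLevel T n) : Summable fun y : succs T x => f y := by
  refine summable_of_subset ?_ hf
  rw [secn_succ_eq_union, ← iUnion_succs_intrLevel hT]
  exact (Set.subset_biUnion_of_mem hx).trans Set.subset_union_left

theorem secSum_eq_add (hf : Summable fun x : secn T n => f x) :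
    secSum T f n = ∑' x : intrLevel T n, f x + ∑' x : leavesLE T n, f x := by
  rw [secSum]
  rw [secn_eq_union] at hf ⊢
  exact Summable.tsum_union_disjoint (disjoint_intrLevel_leavesLE T n)
    (summable_of_subset Set.subset_union_left hf) (summable_of_subset Set.subset_union_right hf)

theorem secSum_succ_eq_add (hf : Summable fun x : secn T (n + 1) => f x) :
    secSum T f (n + 1) = ∑' x : level T (n + 1), f x + ∑' x : leavesLE T n, f x := by
  rw [secSum]
  rw [secn_succ_eq_union] at hf ⊢
  exact Summable.tsum_union_disjoint (disjoint_level_succ_leavesLE T n)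
    (summable_of_subset Set.subset_union_left hf) (summable_of_subset Set.subset_union_right hf)

theorem summable_intrLevel (hf : Summable fun x : secn T n => f x) :
    Summable fun x : intrLevel T n => f x :=
  summable_of_subset (secn_eq_union T n ▸ Set.subset_union_left) hf

theorem hasSum_secSum_succ_sub (hT : IsTree T) (hf : ∀ n, Summable fun x : secn T n => f x)
    (n : ℕ) :
    HasSum (fun x : intrLevel T n => ∑' y : succs T x, f y - f x)
      (secSum T f (n + 1) - secSum T f n) := by
  have hlevel : Summable fun x : level T (n + 1) => f x :=
    summable_of_subset (secn_succ_eq_union T n ▸ Set.subset_union_left) (hf (n + 1))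
  have hfib := ((hasSum_level_succ_iff hT).1 hlevel.hasSum).sigma
    fun x => (summable_succs hT (hf (n + 1)) x.2).hasSum
  rw [secSum_succ_eq_add (hf (n + 1)), secSum_eq_add (hf n), add_sub_add_right_eq_sub]
  exact hfib.sub (summable_intrLevel (hf n)).hasSum

theorem secn_zero (hT : IsTree T) : secn T 0 = {[]} := by
  ext x
  simp only [secn, Set.mem_ofPred_eq, List.length_eq_zero_iff, Nat.not_lt_zero, and_false, or_false,
    Set.mem_singleton_iff, and_iff_right_iff_imp]
  rintro rfl
  exact hT.1

end Sections

section Flows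

variable {T : Set (List ℕ)} {B C : List ℕ → ℝ} {n : ℕ} {x : List ℕ}

theorem IsUnitFlow.pos_of_mem_intr (hB : IsUnitFlow T B) (hx : x ∈ intr T) : 0 < B x :=
  hB.1 x hx.1

theorem IsUnitFlow.hasSum_succs (hB : IsUnitFlow T B) (hx : x ∈ intr T) :
    HasSum (fun y : succs T x => B y) (B x) :=
  hB.2.2 x hx.1 hx.2

theorem IsUnitFlow.hasSum_level_succ (hB : IsUnitFlow T B) (hT : IsTree T) {a : ℝ}
    (ha : HasSum (fun x : intrLevel T n => B x) a) :
    HasSum (fun x : level T (n + 1) => B x) a := by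
  have hsucc (x : intrLevel T n) := hB.hasSum_succs x.2.1
  refine (hasSum_level_succ_iff hT).2 (ha.sigma_of_hasSum hsucc ?_)
  refine (summable_sigma_of_nonneg fun z => (hB.1 _ z.2.2.1).le).2
    ⟨fun x => (hsucc x).summable, ?_⟩
  simpa only [(hsucc _).tsum_eq] using ha.summable

theorem IsUnitFlow.hasSum_secn (hB : IsUnitFlow T B) (hT : IsTree T) (n : ℕ) :
    HasSum (fun x : secn T n => B x) 1 := by
  induction n with
  | zero =>
    rw [secn_zero hT, ← hB.2.1]
    exact hasSum_unique fun x : ({[]} : Set (List ℕ)) => B x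
  | succ n ih =>
    have hleaves : Summable fun x : leavesLE T n => B x :=
      summable_of_subset (secn_eq_union T n ▸ Set.subset_union_right) ih.summable
    have hlevel := hB.hasSum_level_succ hT (summable_intrLevel ih.summable).hasSum
    rw [← ih.tsum_eq, ← secSum, secSum_eq_add ih.summable, secn_succ_eq_union]
    exact hlevel.add_disjoint (disjoint_level_succ_leavesLE T n) hleaves.hasSum

theorem IsUnitFlow.summable_bdry (hB : IsUnitFlow T B) (hT : IsTree T) :
    Summable fun v : bdry T => B v := by
  refine summable_of_sum_le (c := 1) (fun v => (hB.1 v v.2.1).le) fun u => ?_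
  obtain ⟨n, hn⟩ : ∃ n, ∀ v ∈ u, (v : List ℕ).length < n :=
    ⟨_, fun v hv => Nat.lt_succ_of_le (Finset.le_sup (f := fun v : bdry T => v.1.length) hv)⟩
  calc ∑ v ∈ u, B v = ∑ v ∈ u.map (Function.Embedding.subtype _), (secn T n).indicator B v := by
        rw [Finset.sum_map]
        exact Finset.sum_congr rfl fun v hv => (Set.indicator_of_mem (.inr ⟨v.2, hn v hv⟩) B).symm
    _ ≤ 1 := sum_le_hasSum _
        (fun v _ => Set.indicator_nonneg (fun x hx => (hB.1 x (secn_subset T n hx)).le) v)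
        (hasSum_subtype_iff_indicator.1 (hB.hasSum_secn hT n))

theorem IsUnitFlow.one_sub_tsum_bdry_le (hB : IsUnitFlow T B) (hT : IsTree T) (n : ℕ) :
    1 - ∑' v : bdry T, B v ≤ ∑' x : intrLevel T n, B x := by
  have hsub : leavesLE T n ⊆ bdry T := fun _ hx => hx.1
  have hbdry := hB.summable_bdry hT
  have hleaves : ∑' x : leavesLE T n, B x ≤ ∑' v : bdry T, B v :=
    Summable.tsum_le_tsum_of_inj (Set.inclusion hsub) (Set.inclusion_injective hsub)
      (fun v _ => (hB.1 v v.2.1).le) (fun _ => le_rfl) (summable_of_subset hsub hbdry) hbdry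
  have hsecn := hB.hasSum_secn hT n
  have htotal := secSum_eq_add hsecn.summable
  rw [secSum, hsecn.tsum_eq] at htotal
  linarith

/-- The forward transition probabilities `y ↦ B(y)/B(x)` of a flow, on the successors of `x`. -/
def transProb (T : Set (List ℕ)) (B : List ℕ → ℝ) (x : List ℕ) : succs T x → ℝ :=
  fun y => B y / B x

theorem IsUnitFlow.transProb_pos (hB : IsUnitFlow T B) (hx : x ∈ intr T) (y : succs T x) :
    0 < transProb T B x y :=
  div_pos (hB.1 y y.2.1) (hB.pos_of_mem_intr hx)

theorem IsUnitFlow.hasSum_transProb (hB : IsUnitFlow T B) (hx : x ∈ intr T) :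
    HasSum (transProb T B x) 1 := by
  have hsum := (hB.hasSum_succs hx).div_const (B x)
  rwa [div_self (hB.pos_of_mem_intr hx).ne'] at hsum

theorem IsUnitFlow.hasSum_entropy_increment (hB : IsUnitFlow T B) (hT : IsTree T)
    (hH : ∀ n, Summable fun x : secn T n => phi (B x)) (n : ℕ) :
    HasSum (fun x : intrLevel T n => B x * entropy (transProb T B x))
      (secSum T (fun x => phi (B x)) (n + 1) - secSum T (fun x => phi (B x)) n) := by
  refine (hasSum_secSum_succ_sub (f := fun x => phi (B x)) hT hH n).congr_fun fun x => ?_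
  exact (entropy_sub_phi (hB.pos_of_mem_intr x.2.1).ne' (hB.hasSum_succs x.2.1)
    (summable_succs (f := fun x => phi (B x)) hT (hH (n + 1)) x.2)).symm

theorem IsUnitFlow.summable_transProb_mul_logb (hB : IsUnitFlow T B) (hC : IsUnitFlow T C)
    (hT : IsTree T)
    (hD : ∀ n, Summable fun x : secn T n => B x * Real.logb 2 (B x / C x)) (hx : x ∈ intr T) :
    Summable fun y => transProb T B x y * Real.logb 2 (transProb T B x y / transProb T C x y) :=
  (hasSum_rescale (fun y : succs T x => (hC.1 y y.2.1).ne') (hB.pos_of_mem_intr hx).ne'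
    (hC.pos_of_mem_intr hx).ne' (hB.hasSum_succs hx)
    (summable_succs (f := fun x => B x * Real.logb 2 (B x / C x)) hT (hD (x.length + 1))
      ⟨hx, rfl⟩)).summable

theorem IsUnitFlow.hasSum_relEntropy_increment (hB : IsUnitFlow T B) (hC : IsUnitFlow T C)
    (hT : IsTree T)
    (hD : ∀ n, Summable fun x : secn T n => B x * Real.logb 2 (B x / C x)) (n : ℕ) :
    HasSum (fun x : intrLevel T n => B x * relEntropy (transProb T B x) (transProb T C x))
      (secSum T (fun x => B x * Real.logb 2 (B x / C x)) (n + 1) -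
        secSum T (fun x => B x * Real.logb 2 (B x / C x)) n) := by
  refine (hasSum_secSum_succ_sub (f := fun x => B x * Real.logb 2 (B x / C x)) hT hD n).congr_fun
    fun x => ?_
  exact (relEntropy_sub_mul_logb (fun y : succs T x => (hC.1 y y.2.1).ne')
    (hB.pos_of_mem_intr x.2.1).ne' (hC.pos_of_mem_intr x.2.1).ne' (hB.hasSum_succs x.2.1)
    (summable_succs (f := fun x => B x * Real.logb 2 (B x / C x)) hT (hD (n + 1)) x.2)).symm

theorem IsUnitFlow.mul_logb_div_self (hB : IsUnitFlow T B) (x : secn T n) :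
    B x * Real.logb 2 (B x / B x) = 0 := by
  rw [div_self (hB.1 x (secn_subset T n x.2)).ne', Real.logb_one, mul_zero]

end Flows

section Lengths

variable {T : Set (List ℕ)} {B ℓ : List ℕ → ℝ} {c : ℝ}

theorem lenWt_append_singleton (ℓ : List ℕ → ℝ) (x : List ℕ) (m : ℕ) :
    lenWt ℓ (x ++ [m]) = lenWt ℓ x + ℓ x := by
  rw [lenWt, List.length_append, List.length_singleton, Finset.sum_range_succ, List.take_left,
    lenWt]
  congr 1
  refine Finset.sum_congr rfl fun i hi => ?_
  rw [List.take_append_of_le_length (Finset.mem_range.1 hi).le]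

theorem abs_lenWt_le (hT : IsTree T) (hℓ : ∀ x ∈ intr T, |ℓ x| ≤ c) {x : List ℕ} (hx : x ∈ T) :
    |lenWt ℓ x| ≤ x.length * c := by
  have hprefix : ∀ i ∈ Finset.range x.length, |ℓ (x.take i)| ≤ c := fun i hi =>
    hℓ _ (mem_intr_of_mem_succs hT
      ⟨hT.2 x hx _ (List.take_prefix _ _), _, List.take_succ_eq_append_getElem (by simpa using hi)⟩)
  calc |lenWt ℓ x| ≤ ∑ i ∈ Finset.range x.length, |ℓ (x.take i)| := Finset.abs_sum_le_sum_abs _ _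
    _ ≤ x.length * c := by simpa using Finset.sum_le_card_nsmul _ _ c hprefix

theorem IsUnitFlow.summable_lenWt_mul (hB : IsUnitFlow T B) (hT : IsTree T) (hc : 0 ≤ c)
    (hℓ : ∀ x ∈ intr T, |ℓ x| ≤ c) (n : ℕ) : Summable fun x : secn T n => lenWt ℓ x * B x := by
  refine ((hB.hasSum_secn hT n).summable.mul_left (n * c)).of_norm_bounded fun x => ?_
  have hxT := secn_subset T n x.2
  rw [Real.norm_eq_abs, abs_mul, abs_of_pos (hB.1 x hxT)]
  refine mul_le_mul_of_nonneg_right ((abs_lenWt_le hT hℓ hxT).trans ?_) (hB.1 x hxT).le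
  gcongr
  exact length_le_of_mem_secn x.2

theorem IsUnitFlow.hasSum_length_increment (hB : IsUnitFlow T B) (hT : IsTree T)
    (hL : ∀ n, Summable fun x : secn T n => lenWt ℓ x * B x) (n : ℕ) :
    HasSum (fun x : intrLevel T n => ℓ x * B x)
      (secSum T (fun x => lenWt ℓ x * B x) (n + 1) - secSum T (fun x => lenWt ℓ x * B x) n) := by
  refine (hasSum_secSum_succ_sub hT hL n).congr_fun fun x => ?_
  have hsucc : HasSum (fun y : succs T x => lenWt ℓ y * B y) ((lenWt ℓ x + ℓ x) * B x) := by
    refine ((hB.hasSum_succs x.2.1).mul_left _).congr_fun fun y => ?_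
    obtain ⟨m, hm⟩ := y.2.2
    rw [hm, lenWt_append_singleton]
  rw [hsucc.tsum_eq]
  ring

theorem IsUnitFlow.mul_le_secSum_lenWt (hB : IsUnitFlow T B) (hT : IsTree T) (hc : 0 ≤ c)
    (hℓ : ∀ x ∈ intr T, c ≤ ℓ x) (hL : ∀ n, Summable fun x : secn T n => lenWt ℓ x * B x)
    (n : ℕ) :
    c * (1 - ∑' v : bdry T, B v) * n ≤ secSum T (fun x => lenWt ℓ x * B x) n := by
  induction n with
  | zero =>
    rw [secSum, secn_zero hT, tsum_singleton [] fun x => lenWt ℓ x * B x]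
    simp [lenWt]
  | succ n ih =>
    have hmass : c * ∑' x : intrLevel T n, B x ≤ _ :=
      hasSum_le (fun x : intrLevel T n => mul_le_mul_of_nonneg_right (hℓ x x.2.1)
          (hB.pos_of_mem_intr x.2.1).le)
        ((summable_intrLevel (hB.hasSum_secn hT n).summable).hasSum.mul_left c)
        (hB.hasSum_length_increment hT hL n)
    have hends := mul_le_mul_of_nonneg_left (hB.one_sub_tsum_bdry_le hT n) hc
    push_cast
    linarith

end Lengths

section LocalEstimate

variable {T : Set (List ℕ)} {BP BQ ℓ : List ℕ → ℝ} {c h ε : ℝ}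

theorem UnifSummable.exists_finset {g : List ℕ → List ℕ → ℝ} (hg : UnifSummable T g)
    (hε : 0 < ε) :
    ∃ M : ℕ, ∀ x ∈ intr T, (Summable fun y : succs T x => g x y) ∧
      ∃ F : Finset (succs T x), F.card ≤ M ∧ ∑' y : succs T x, g x y - ∑ y ∈ F, g x y < ε := by
  classical
  obtain ⟨M, hM⟩ := hg ε hε
  refine ⟨M, fun x hx => ?_⟩
  obtain ⟨F, -, hFcard, hsum, htail⟩ := hM x hx.1 hx.2
  set F' : Finset (succs T x) := F.subtype (· ∈ succs T x) with hF'
  let e : ↥((F' : Set (succs T x))ᶜ) ≃ {y : List ℕ // y ∈ succs T x ∧ y ∉ F} :=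
    (Equiv.subtypeEquivRight fun y => by simp [hF']).trans
      (Equiv.subtypeSubtypeEquivSubtypeInter (· ∈ succs T x) (· ∉ F))
  have hsummable : Summable fun y : succs T x => g x y :=
    (Finset.summable_compl_iff F').1 ((e.summable_iff
      (f := fun y : {y : List ℕ // y ∈ succs T x ∧ y ∉ F} => g x y)).2 hsum)
  have htsum : ∑' y : ↥((F' : Set (succs T x))ᶜ), g x y = _ :=
    e.tsum_eq fun y : {y : List ℕ // y ∈ succs T x ∧ y ∉ F} => g x y
  refine ⟨hsummable, F', ?_, ?_⟩
  · exact (Finset.card_subtype _ F).trans_le ((Finset.card_filter_le F _).trans hFcard)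
  · rw [← hsummable.sum_add_tsum_compl (s := F'), add_sub_cancel_left, htsum]
    exact htail

theorem exists_abs_entropy_transProb_sub_le (hBP : IsUnitFlow T BP) (hBQ : IsUnitFlow T BQ)
    (hUSp : UnifSummable T fun x y => phi (BP y / BP x))
    (hUSq : UnifSummable T fun x y => phi (BQ y / BQ x)) (hε : 0 < ε) :
    ∃ C : ℝ, ∀ x ∈ intr T,
      (Summable fun y =>
        transProb T BP x y * Real.logb 2 (transProb T BP x y / transProb T BQ x y)) →
      |entropy (transProb T BP x) - entropy (transProb T BQ x)| ≤
        ε + C * relEntropy (transProb T BP x) (transProb T BQ x) := by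
  obtain ⟨M, hM⟩ := hUSp.exists_finset (half_pos hε)
  obtain ⟨M', hM'⟩ := hUSq.exists_finset (half_pos hε)
  obtain ⟨C, hC⟩ := exists_abs_entropy_sub_entropy_le (half_pos hε) (max M M')
  refine ⟨C, fun x hx hD => ?_⟩
  obtain ⟨hsp, F, hF, htp⟩ := hM x hx
  obtain ⟨hsq, F', hF', htq⟩ := hM' x hx
  have hlocal := hC (fun y => (hBP.transProb_pos hx y).le) (hBQ.transProb_pos hx)
    (hBP.hasSum_transProb hx) (hBQ.hasSum_transProb hx) hsp hsq (hF.trans (le_max_left M M'))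
    (hF'.trans (le_max_right M M')) htp htq hD
  rwa [mul_div_cancel₀ ε two_ne_zero] at hlocal

theorem exists_abs_entropy_transProb_sub_mul_le (hBP : IsUnitFlow T BP) (hBQ : IsUnitFlow T BQ)
    (hUSp : UnifSummable T fun x y => phi (BP y / BP x))
    (hUSq : UnifSummable T fun x y => phi (BQ y / BQ x)) (hc : 0 < c)
    (hℓ : ∀ x ∈ intr T, c ≤ ℓ x)
    (hh : ∀ ε : ℝ, 0 < ε → ∃ k : ℕ, ∀ x ∈ intr T, k ≤ x.length →
      |entropy (transProb T BQ x) / ℓ x - h| < ε) (hε : 0 < ε) :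
    ∃ (C : ℝ) (k : ℕ), ∀ x ∈ intr T, k ≤ x.length →
      (Summable fun y =>
        transProb T BP x y * Real.logb 2 (transProb T BP x y / transProb T BQ x y)) →
      |entropy (transProb T BP x) - h * ℓ x| ≤
        ε * ℓ x + C * relEntropy (transProb T BP x) (transProb T BQ x) := by
  obtain ⟨C, hC⟩ := exists_abs_entropy_transProb_sub_le hBP hBQ hUSp hUSq
    (mul_pos (half_pos hε) hc)
  obtain ⟨k, hk⟩ := hh (ε / 2) (half_pos hε)
  refine ⟨C, k, fun x hx hxk hD => ?_⟩
  have hℓx : 0 < ℓ x := hc.trans_le (hℓ x hx)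
  have hPQ : |entropy (transProb T BP x) - entropy (transProb T BQ x)| ≤
      ε / 2 * ℓ x + C * relEntropy (transProb T BP x) (transProb T BQ x) :=
    (hC x hx hD).trans (by gcongr; exact hℓ x hx)
  have hQ : |entropy (transProb T BQ x) - h * ℓ x| ≤ ε / 2 * ℓ x := by
    have hquot := (hk x hx hxk).le
    rwa [div_sub' hℓx.ne', abs_div, abs_of_pos hℓx, div_le_iff₀ hℓx, mul_comm (ℓ x)] at hquot
  linarith [abs_sub_le (entropy (transProb T BP x)) (entropy (transProb T BQ x)) (h * ℓ x)]

theorem exists_abs_increment_le (hT : IsTree T) (hBP : IsUnitFlow T BP) (hBQ : IsUnitFlow T BQ)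
    (hUSp : UnifSummable T fun x y => phi (BP y / BP x))
    (hUSq : UnifSummable T fun x y => phi (BQ y / BQ x))
    (hHPn : ∀ n, Summable fun x : secn T n => phi (BP x)) (hc : 0 < c)
    (hℓ : ∀ x ∈ intr T, c ≤ ℓ x) (hLn : ∀ n, Summable fun x : secn T n => lenWt ℓ x * BP x)
    (hh : ∀ ε : ℝ, 0 < ε → ∃ k : ℕ, ∀ x ∈ intr T, k ≤ x.length →
      |entropy (transProb T BQ x) / ℓ x - h| < ε)
    (hDn : ∀ n, Summable fun x : secn T n => BP x * Real.logb 2 (BP x / BQ x)) (hε : 0 < ε) :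
    letI H := secSum T fun x => phi (BP x)
    letI L := secSum T fun x => lenWt ℓ x * BP x
    letI D := secSum T fun x => BP x * Real.logb 2 (BP x / BQ x)
    ∃ (C : ℝ) (k : ℕ), ∀ n, k ≤ n →
      |H (n + 1) - H n - h * (L (n + 1) - L n)| ≤
        ε * (L (n + 1) - L n) + C * (D (n + 1) - D n) := by
  obtain ⟨C, k, hlocal⟩ :=
    exists_abs_entropy_transProb_sub_mul_le hBP hBQ hUSp hUSq hc hℓ hh hε
  refine ⟨C, k, fun n hn => ?_⟩
  have hL := hBP.hasSum_length_increment hT hLn n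
  refine ((hBP.hasSum_entropy_increment hT hHPn n).sub (hL.mul_left h)).norm_le_of_bounded
    ((hL.mul_left ε).add ((hBP.hasSum_relEntropy_increment hBQ hT hDn n).mul_left C)) fun x => ?_
  have hx : (x : List ℕ) ∈ intr T := x.2.1
  have hBx := hBP.pos_of_mem_intr hx
  calc |BP x * entropy (transProb T BP x) - h * (ℓ x * BP x)|
      = BP x * |entropy (transProb T BP x) - h * ℓ x| := by
        rw [← abs_of_pos hBx, ← abs_mul, abs_of_pos hBx]
        ring_nf
    _ ≤ BP x * (ε * ℓ x + C * relEntropy (transProb T BP x) (transProb T BQ x)) :=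
        mul_le_mul_of_nonneg_left (hlocal x hx (hn.trans_eq x.2.2.symm)
          (hBP.summable_transProb_mul_logb hBQ hT hDn hx)) hBx.le
    _ = ε * (ℓ x * BP x) + C * (BP x * relEntropy (transProb T BP x) (transProb T BQ x)) := by ring

end LocalEstimate

theorem asymptotic_entropy_rate_general {T : Set (List ℕ)} (hT : IsTree T)
    {BP BQ : List ℕ → ℝ} (hBP : IsUnitFlow T BP) (hBQ : IsUnitFlow T BQ)
    (hendsP : ∑' v : bdry T, BP v < 1)
    (hUSp : UnifSummable T fun x y => phi (BP y / BP x))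
    (hUSq : UnifSummable T fun x y => phi (BQ y / BQ x))
    (hHPn : ∀ n, Summable fun x : secn T n => phi (BP x))
    {ℓ : List ℕ → ℝ} {c : ℝ} (hc : 0 < c) (hℓ : ∀ x ∈ intr T, c ≤ ℓ x)
    (hLn : ∀ n, Summable fun x : secn T n => lenWt ℓ x * BP x) {h : ℝ}
    (hh : ∀ ε : ℝ, 0 < ε → ∃ k : ℕ, ∀ x ∈ intr T, k ≤ x.length →
      |entropy (transProb T BQ x) / ℓ x - h| < ε)
    (hDn : ∀ n, Summable fun x : secn T n => BP x * Real.logb 2 (BP x / BQ x))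
    (hDlim : Tendsto (fun n : ℕ =>
      (∑' x : secn T n, BP x * Real.logb 2 (BP x / BQ x)) / n) atTop (𝓝 0)) :
    Tendsto (fun n : ℕ =>
        (∑' x : secn T n, phi (BP x)) / (∑' x : secn T n, lenWt ℓ x * BP x)) atTop (𝓝 h) := by
  set D := secSum T fun x => BP x * Real.logb 2 (BP x / BQ x)
  set L := secSum T fun x => lenWt ℓ x * BP x
  have hrate : 0 < c * (1 - ∑' v : bdry T, BP v) := mul_pos hc (sub_pos.2 hendsP)
  have hgrowth (n : ℕ) : c * (1 - ∑' v : bdry T, BP v) * n ≤ L n :=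
    hBP.mul_le_secSum_lenWt hT hc.le hℓ hLn n
  have hL : Tendsto L atTop atTop :=
    tendsto_atTop_mono hgrowth (tendsto_natCast_atTop_atTop.const_mul_atTop hrate)
  have hDn_o : D =o[atTop] fun n : ℕ => (n : ℝ) :=
    (isLittleO_iff_tendsto' ((eventually_ne_atTop 0).mono fun n hn h₀ =>
      absurd (Nat.cast_eq_zero.1 h₀) hn)).2 hDlim
  have hn_O : (fun n : ℕ => (n : ℝ)) =O[atTop] L := by
    refine IsBigO.of_bound (c * (1 - ∑' v : bdry T, BP v))⁻¹ (Eventually.of_forall fun n => ?_)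
    rw [Real.norm_natCast, inv_mul_eq_div, le_div_iff₀' hrate]
    exact (hgrowth n).trans (le_abs_self _)
  exact tendsto_div_of_abs_increment_le hL (hDn_o.trans_isBigO hn_O) fun ε hε =>
    exists_abs_increment_le hT hBP hBQ hUSp hUSq hHPn hc hℓ hLn hh hDn hε

/-- Asymptotic entropy-rate comparison on trees with infinite geodesics (Theorem `asy`):
under assumptions (i)–(iii), `H(P_n)/ℓ(P_n) → h` and `H(Q_n)/ℓ(Q_n) → h`. -/
theorem asymptotic_entropy_rate
    (T : Set (List ℕ)) (hT : IsTree T) (hU : NoUnary T)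
    (BP BQ : List ℕ → ℝ) (hBP : IsUnitFlow T BP) (hBQ : IsUnitFlow T BQ)
    (hendsP : (∑' v : bdry T, BP v) < 1) (hendsQ : (∑' v : bdry T, BQ v) < 1)
    (hUSp : UnifSummable T (fun x y => phi (BP y / BP x)))
    (hUSq : UnifSummable T (fun x y => phi (BQ y / BQ x)))
    (hHPn : ∀ n : ℕ, Summable fun x : secn T n => phi (BP x))
    (hHQn : ∀ n : ℕ, Summable fun x : secn T n => phi (BQ x))
    (ℓ : List ℕ → ℝ) (c₁ c₂ : ℝ) (hc₁ : 0 < c₁) (hc₁₂ : c₁ ≤ c₂)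
    (hℓ : ∀ x ∈ T, ¬ IsLeaf T x → c₁ ≤ ℓ x ∧ ℓ x ≤ c₂)
    (h : ℝ)
    (hh : ∀ ε : ℝ, 0 < ε → ∃ k : ℕ, ∀ x ∈ T, ¬ IsLeaf T x → k ≤ x.length →
      |(∑' y : succs T x, phi (BQ y / BQ x)) / ℓ x - h| < ε)
    (hDn : ∀ n : ℕ, Summable fun x : secn T n => |BP x * Real.logb 2 (BP x / BQ x)|)
    (hDlim : Tendsto (fun n : ℕ =>
        (∑' x : secn T n, BP x * Real.logb 2 (BP x / BQ x)) / n) atTop (nhds 0)) :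
    Tendsto (fun n : ℕ =>
        (∑' x : secn T n, phi (BP x)) / (∑' x : secn T n, lenWt ℓ x * BP x))
      atTop (nhds h) ∧
    Tendsto (fun n : ℕ =>
        (∑' x : secn T n, phi (BQ x)) / (∑' x : secn T n, lenWt ℓ x * BQ x))
      atTop (nhds h) := by
  have hinc : ∀ x ∈ intr T, c₁ ≤ ℓ x := fun x hx => (hℓ x hx.1 hx.2).1
  have hlen {B : List ℕ → ℝ} (hB : IsUnitFlow T B) :
      ∀ n, Summable fun x : secn T n => lenWt ℓ x * B x :=
    hB.summable_lenWt_mul hT (hc₁.le.trans hc₁₂) fun x hx =>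
      (abs_of_pos (hc₁.trans_le (hinc x hx))).trans_le (hℓ x hx.1 hx.2).2
  have hh' : ∀ ε : ℝ, 0 < ε → ∃ k : ℕ, ∀ x ∈ intr T, k ≤ x.length →
      |entropy (transProb T BQ x) / ℓ x - h| < ε := fun ε hε =>
    (hh ε hε).imp fun k hk x hx => hk x hx.1 hx.2
  refine ⟨asymptotic_entropy_rate_general hT hBP hBQ hendsP hUSp hUSq hHPn hc₁ hinc (hlen hBP) hh'
    (fun n => (hDn n).of_abs) hDlim, asymptotic_entropy_rate_general hT hBQ hBQ hendsQ hUSq hUSq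
    hHQn hc₁ hinc (hlen hBQ) hh' ?_ ?_⟩
  all_goals simp only [hBQ.mul_logb_div_self]
  exacts [fun _ => summable_zero, by simp]
end
end
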